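/- arXiv:2202.11369 — 4 statements merged into one kernel-verified Lean document; each statement's English description precedes it below -/
import Mathlib

section
/- Let E be a real inner product space, r ≥ 1 a real number, and x, y ∈ E. Then ⟨‖x‖^{r-1} x − ‖y‖^{r-1} y, x − y⟩ ≥ (1/2) ‖x‖^{r-1} ‖x − y‖^2 + (1/2) ‖y‖^{r-1} ‖x − y‖^2. -/
/-- Pointwise monotonicity of the Forchheimer nonlinearity:
`⟨‖x‖^{r-1} x − ‖y‖^{r-1} y, x − y⟩ ≥ ½‖x‖^{r-1}‖x−y‖² + ½‖y‖^{r-1}‖x−y‖²`. -/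
theorem forchheimer_monotone {E : Type*} [NormedAddCommGroup E] [InnerProductSpace ℝ E]
    (r : ℝ) (hr : 1 ≤ r) (x y : E) :
    (1 / 2) * ‖x‖ ^ (r - 1) * ‖x - y‖ ^ (2 : ℕ) +
        (1 / 2) * ‖y‖ ^ (r - 1) * ‖x - y‖ ^ (2 : ℕ) ≤
      (inner ℝ (‖x‖ ^ (r - 1) • x - ‖y‖ ^ (r - 1) • y) (x - y) : ℝ) := by
  have key : 0 ≤ (‖x‖ ^ (r - 1) - ‖y‖ ^ (r - 1)) * (‖x‖ ^ 2 - ‖y‖ ^ 2) := by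
    rcases le_total ‖x‖ ‖y‖ with h | h
    · have h1 := Real.rpow_le_rpow (norm_nonneg x) h (sub_nonneg.2 hr)
      have h2 := pow_le_pow_left₀ (norm_nonneg x) h 2
      exact mul_nonneg_of_nonpos_of_nonpos (sub_nonpos.2 h1) (sub_nonpos.2 h2)
    · have h1 := Real.rpow_le_rpow (norm_nonneg y) h (sub_nonneg.2 hr)
      have h2 := pow_le_pow_left₀ (norm_nonneg y) h 2
      exact mul_nonneg (sub_nonneg.2 h1) (sub_nonneg.2 h2)
  rw [norm_sub_sq_real, inner_sub_left, inner_sub_right, inner_sub_right]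
  simp only [real_inner_smul_left, real_inner_self_eq_norm_sq]
  rw [real_inner_comm x y]
  linarith
end

section
/- Let (Ω, μ) be a measure space, d ≥ 1 and r ≥ 1 a real number. Let u, v : Ω → ℝ^d be measurable with ∫_Ω ‖u(x)‖^{r+1} dμ(x) < ∞ and ∫_Ω ‖v(x)‖^{r+1} dμ(x) < ∞. Then ∫_Ω ⟨‖u(x)‖^{r-1} u(x) − ‖v(x)‖^{r-1} v(x), u(x) − v(x)⟩ dμ(x) ≥ (1/2) ∫_Ω ‖u(x)‖^{r-1} ‖u(x) − v(x)‖^2 dμ(x) + (1/2) ∫_Ω ‖v(x)‖^{r-1} ‖u(x) − v(x)‖^2 dμ(x) ≥ 0, all integrals being finite. -/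
open MeasureTheory

theorem forch_rpow_split (a r : ℝ) (ha : 0 ≤ a) (hr : 1 ≤ r) :
    a ^ (r + 1) = a ^ (r - 1) * a ^ (2 : ℕ) := by
  rw [← Real.rpow_natCast a 2, ← Real.rpow_add_of_nonneg ha (by linarith) (by norm_num)]
  congr 1
  push_cast
  ring

theorem forch_cross (a b r : ℝ) (ha : 0 ≤ a) (hb : 0 ≤ b) (hr : 1 ≤ r) :
    a ^ (r - 1) * b ^ (2 : ℕ) ≤ a ^ (r + 1) + b ^ (r + 1) := by
  rw [forch_rpow_split a r ha hr, forch_rpow_split b r hb hr]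
  have hA : 0 ≤ a ^ (r - 1) := Real.rpow_nonneg ha _
  have hB : 0 ≤ b ^ (r - 1) := Real.rpow_nonneg hb _
  rcases le_total a b with h | h
  · have h1 : a ^ (r - 1) ≤ b ^ (r - 1) := Real.rpow_le_rpow ha h (by linarith)
    have h2 := mul_le_mul_of_nonneg_right h1 (sq_nonneg b)
    have h3 := mul_nonneg hA (sq_nonneg a)
    linarith
  · have h1 : b ^ 2 ≤ a ^ 2 := pow_le_pow_left₀ hb h 2
    have h2 := mul_le_mul_of_nonneg_left h1 hA
    have h3 := mul_nonneg hB (sq_nonneg b)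
    linarith

theorem forch_mono (a b r : ℝ) (ha : 0 ≤ a) (hb : 0 ≤ b) (hr : 1 ≤ r) :
    0 ≤ (a ^ (r - 1) - b ^ (r - 1)) * (a ^ 2 - b ^ 2) := by
  rcases le_total a b with h | h
  · have h1 : a ^ (r - 1) ≤ b ^ (r - 1) := Real.rpow_le_rpow ha h (by linarith)
    have h2 : a ^ 2 ≤ b ^ 2 := pow_le_pow_left₀ ha h 2
    exact mul_nonneg_of_nonpos_of_nonpos (by linarith) (by linarith)
  · have h1 : b ^ (r - 1) ≤ a ^ (r - 1) := Real.rpow_le_rpow hb h (by linarith)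
    have h2 : b ^ 2 ≤ a ^ 2 := pow_le_pow_left₀ hb h 2
    exact mul_nonneg (by linarith) (by linarith)

theorem forch_identity {E : Type*} [NormedAddCommGroup E] [InnerProductSpace ℝ E]
    (A B : ℝ) (x y : E) :
    inner ℝ (A • x - B • y) (x - y) = (1 / 2) * (A * ‖x - y‖ ^ 2) + (1 / 2) * (B * ‖x - y‖ ^ 2)
      + (1 / 2) * ((A - B) * (‖x‖ ^ 2 - ‖y‖ ^ 2)) := by
  rw [norm_sub_sq_real, inner_sub_left, inner_sub_right, inner_sub_right,
    real_inner_smul_left, real_inner_smul_left, real_inner_smul_left, real_inner_smul_left,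
    real_inner_self_eq_norm_sq, real_inner_self_eq_norm_sq, real_inner_comm x y]
  ring

theorem forch_weight_bound {E : Type*} [NormedAddCommGroup E] [InnerProductSpace ℝ E]
    (r : ℝ) (hr : 1 ≤ r) (x y : E) :
    ‖x‖ ^ (r - 1) * ‖x - y‖ ^ 2 ≤ 4 * (‖x‖ ^ (r + 1) + ‖y‖ ^ (r + 1)) := by
  have hA : 0 ≤ ‖x‖ ^ (r - 1) := Real.rpow_nonneg (norm_nonneg x) _
  have h1 : ‖x - y‖ ^ 2 ≤ 2 * ‖x‖ ^ 2 + 2 * ‖y‖ ^ 2 := by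
    nlinarith [parallelogram_law_with_norm ℝ x y, sq_nonneg ‖x + y‖]
  have h2 := mul_le_mul_of_nonneg_left h1 hA
  have h3 := forch_cross ‖x‖ ‖y‖ r (norm_nonneg _) (norm_nonneg _) hr
  have h4 := forch_rpow_split ‖x‖ r (norm_nonneg _) hr
  have h5 : 0 ≤ ‖y‖ ^ (r + 1) := Real.rpow_nonneg (norm_nonneg y) _
  linarith

/-- Integrated monotonicity of the Forchheimer nonlinearity `u ↦ |u|^{r-1}u`:
all integrals are finite and
`∫ ⟨‖u‖^{r-1}u − ‖v‖^{r-1}v, u − v⟩ ≥ ½∫‖u‖^{r-1}‖u−v‖² + ½∫‖v‖^{r-1}‖u−v‖² ≥ 0`. -/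
theorem forchheimer_monotone_integral {Ω : Type*} [MeasurableSpace Ω] (μ : Measure Ω)
    (d : ℕ) (hd : 1 ≤ d) (r : ℝ) (hr : 1 ≤ r)
    (u v : Ω → EuclideanSpace ℝ (Fin d)) (hu : Measurable u) (hv : Measurable v)
    (hui : ∫⁻ x, ENNReal.ofReal (‖u x‖ ^ (r + 1)) ∂μ < ⊤)
    (hvi : ∫⁻ x, ENNReal.ofReal (‖v x‖ ^ (r + 1)) ∂μ < ⊤) :
    Integrable (fun x =>
        (inner ℝ (‖u x‖ ^ (r - 1) • u x - ‖v x‖ ^ (r - 1) • v x) (u x - v x) : ℝ)) μ ∧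
      Integrable (fun x => ‖u x‖ ^ (r - 1) * ‖u x - v x‖ ^ (2 : ℕ)) μ ∧
      Integrable (fun x => ‖v x‖ ^ (r - 1) * ‖u x - v x‖ ^ (2 : ℕ)) μ ∧
      ((1 / 2) * ∫ x, ‖u x‖ ^ (r - 1) * ‖u x - v x‖ ^ (2 : ℕ) ∂μ +
          (1 / 2) * ∫ x, ‖v x‖ ^ (r - 1) * ‖u x - v x‖ ^ (2 : ℕ) ∂μ ≤
        ∫ x, (inner ℝ (‖u x‖ ^ (r - 1) • u x - ‖v x‖ ^ (r - 1) • v x) (u x - v x) : ℝ) ∂μ) ∧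
      (0 ≤ (1 / 2) * ∫ x, ‖u x‖ ^ (r - 1) * ‖u x - v x‖ ^ (2 : ℕ) ∂μ +
          (1 / 2) * ∫ x, ‖v x‖ ^ (r - 1) * ‖u x - v x‖ ^ (2 : ℕ) ∂μ) := by
  have hPi : ∀ w : Ω → EuclideanSpace ℝ (Fin d), Measurable w →
      ∫⁻ x, ENNReal.ofReal (‖w x‖ ^ (r + 1)) ∂μ < ⊤ →
      Integrable (fun x => ‖w x‖ ^ (r + 1)) μ := by
    intro w hw hwi
    refine ⟨(hw.norm.pow_const _).aestronglyMeasurable, ?_⟩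
    rw [hasFiniteIntegral_iff_ofReal
      (Filter.Eventually.of_forall fun x => Real.rpow_nonneg (norm_nonneg _) _)]
    exact hwi
  have hW : ∀ w z : Ω → EuclideanSpace ℝ (Fin d), Measurable w → Measurable z →
      Integrable (fun x => ‖w x‖ ^ (r + 1)) μ → Integrable (fun x => ‖z x‖ ^ (r + 1)) μ →
      Integrable (fun x => ‖w x‖ ^ (r - 1) * ‖w x - z x‖ ^ (2 : ℕ)) μ := by
    intro w z hw hz hwi hzi
    refine ((hwi.add hzi).const_mul 4).mono'
      ((hw.norm.pow_const _).mul ((hw.sub hz).norm.pow_const 2)).aestronglyMeasurable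
      (Filter.Eventually.of_forall fun x => ?_)
    rw [Real.norm_of_nonneg (by positivity)]
    exact forch_weight_bound r hr (w x) (z x)
  have hP := hPi u hu hui
  have hQ := hPi v hv hvi
  have h1 := hW u v hu hv hP hQ
  have h2 : Integrable (fun x => ‖v x‖ ^ (r - 1) * ‖u x - v x‖ ^ (2 : ℕ)) μ := by
    have := hW v u hv hu hQ hP
    simpa only [norm_sub_rev] using this
  have h3 : Integrable (fun x => (‖u x‖ ^ (r - 1) - ‖v x‖ ^ (r - 1)) *
      (‖u x‖ ^ 2 - ‖v x‖ ^ 2)) μ := by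
    refine (hP.add hQ).mono'
      (((hu.norm.pow_const _).sub (hv.norm.pow_const _)).mul
        ((hu.norm.pow_const 2).sub (hv.norm.pow_const 2))).aestronglyMeasurable
      (Filter.Eventually.of_forall fun x => ?_)
    rw [Real.norm_of_nonneg (forch_mono _ _ r (norm_nonneg _) (norm_nonneg _) hr)]
    have e1 := forch_rpow_split ‖u x‖ r (norm_nonneg _) hr
    have e2 := forch_rpow_split ‖v x‖ r (norm_nonneg _) hr
    have e3 : 0 ≤ ‖u x‖ ^ (r - 1) * ‖v x‖ ^ 2 := by positivity
    have e4 : 0 ≤ ‖v x‖ ^ (r - 1) * ‖u x‖ ^ 2 := by positivity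
    simp only [Pi.add_apply]
    linarith
  have h12 := (h1.const_mul (1 / 2)).add (h2.const_mul (1 / 2))
  have h4 : Integrable (fun x =>
      (inner ℝ (‖u x‖ ^ (r - 1) • u x - ‖v x‖ ^ (r - 1) • v x) (u x - v x) : ℝ)) μ := by
    refine (h12.add (h3.const_mul (1 / 2))).congr (Filter.Eventually.of_forall fun x => ?_)
    exact (forch_identity _ _ _ _).symm
  refine ⟨h4, h1, h2, ?_, ?_⟩
  · rw [← integral_const_mul, ← integral_const_mul,
      ← integral_add (h1.const_mul (1 / 2)) (h2.const_mul (1 / 2))]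
    refine integral_mono h12 h4 fun x => ?_
    have := forch_mono ‖u x‖ ‖v x‖ r (norm_nonneg _) (norm_nonneg _) hr
    simp only [forch_identity, Pi.add_apply]
    linarith
  · have i1 : 0 ≤ ∫ x, ‖u x‖ ^ (r - 1) * ‖u x - v x‖ ^ (2 : ℕ) ∂μ :=
      integral_nonneg fun x => by positivity
    have i2 : 0 ≤ ∫ x, ‖v x‖ ^ (r - 1) * ‖u x - v x‖ ^ (2 : ℕ) ∂μ :=
      integral_nonneg fun x => by positivity
    linarith
end

section
/- Let T > 0 and let (w_k)_{k∈ℕ} be a sequence of independent standard one-dimensional Brownian motions on a probability space (Ω, F, P), extended by w_k(t) = 0 for t ≤ 0. For n ∈ ℕ set σ = T/2^n and, for t ∈ [0,T], ẇ^n_k(t) = σ^{-1} ( w_k(⌊t/σ⌋σ) − w_k((⌊t/σ⌋ − 1)σ) ), where ⌊·⌋ is the floor function. Then there exists a constant δ₀ > 0 such that for every δ > δ₀/√T and every t ∈ [0,T], lim_{n→∞} P( sup_{1≤k≤n} sup_{0≤s≤t} |ẇ^n_k(s)| > δ n^{1/2} 2^{n/2} ) = 0. -/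
open MeasureTheory ProbabilityTheory Filter

/-- A standard one-dimensional Brownian motion (extended by `0` for `t ≤ 0`):
measurable marginals, continuous paths, zero for nonpositive times, Gaussian
increments `w t − w s ∼ N(0, t − s)` for `0 ≤ s ≤ t`, and independent increments. -/
structure IsStandardBrownian {Ω : Type*} [MeasurableSpace Ω] (P : Measure Ω)
    (w : ℝ → Ω → ℝ) : Prop where
  meas : ∀ t, Measurable (w t)
  cont : ∀ ω, Continuous fun t => w t ω
  zero_nonpos : ∀ t ≤ (0 : ℝ), ∀ ω, w t ω = 0
  incr_gauss : ∀ s t : ℝ, 0 ≤ s → s ≤ t →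
    P.map (fun ω => w t ω - w s ω) = gaussianReal 0 (Real.toNNReal (t - s))
  incr_indep : ∀ (n : ℕ) (t : Fin (n + 1) → ℝ), Monotone t → 0 ≤ t 0 →
    iIndepFun
      (fun i : Fin n => fun ω => w (t i.succ) ω - w (t i.castSucc) ω) P

lemma gauss_tail {Ω : Type*} [MeasurableSpace Ω] (P : Measure Ω) [IsProbabilityMeasure P]
    (X : Ω → ℝ) (v : NNReal) (hX : P.map X = gaussianReal 0 v) (a : ℝ) (ha : 0 ≤ a) :
    P {ω | a < |X ω|} ≤ ENNReal.ofReal (2 * Real.exp (-a ^ 2 / (2 * v))) := by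
  have hsub : HasSubgaussianMGF X v P := by
    constructor
    · intro t
      rw [← mgf_pos_iff, mgf_gaussianReal hX]
      exact Real.exp_pos _
    · intro t
      rw [mgf_gaussianReal hX]
      simp
  have h1 := hsub.measure_ge_le ha
  have h2 := hsub.neg.measure_ge_le ha
  have h3 : P.real {ω | a < |X ω|} ≤ P.real ({ω | a ≤ X ω} ∪ {ω | a ≤ (-X) ω}) := by
    apply measureReal_mono
    · intro ω hω
      rcases lt_abs.1 (show a < |X ω| from hω) with h | h
      · exact Or.inl h.le
      · exact Or.inr h.le
    · exact measure_ne_top _ _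
  have h4 := measureReal_union_le (μ := P) {ω | a ≤ X ω} {ω | a ≤ (-X) ω}
  rw [← ENNReal.ofReal_toReal (measure_ne_top P {ω | a < |X ω|})]
  apply ENNReal.ofReal_le_ofReal
  have : (P {ω | a < |X ω|}).toReal = P.real {ω | a < |X ω|} := rfl
  linarith

/-- Wong–Zakai estimate (Lemma 2.1 of \cite{ICAM}),
first form: there is `δ₀ > 0` such that for every `δ > δ₀/√T` and `t ∈ [0,T]`,
`P(sup_{1≤k≤n} sup_{0≤s≤t} |ẇⁿ_k(s)| > δ n^{1/2} 2^{n/2}) → 0` as `n → ∞`,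
where `ẇⁿ_k(s) = σ⁻¹(w_k(⌊s/σ⌋σ) − w_k((⌊s/σ⌋−1)σ))` and `σ = T/2ⁿ`. -/
theorem wong_zakai_sup_single (T : ℝ) (hT : 0 < T)
    {Ω : Type*} [MeasurableSpace Ω] (P : Measure Ω) [IsProbabilityMeasure P]
    (w : ℕ → ℝ → Ω → ℝ) (hBM : ∀ k, IsStandardBrownian P (w k))
    (hindep : iIndepFun
      (fun (k : ℕ) (ω : Ω) (t : ℝ) => w k t ω) P) :
    ∃ δ₀ : ℝ, 0 < δ₀ ∧ ∀ δ : ℝ, δ₀ / Real.sqrt T < δ → ∀ t ∈ Set.Icc (0 : ℝ) T,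
      Tendsto (fun n : ℕ =>
        P {ω | δ * (n : ℝ) ^ ((1 : ℝ) / 2) * (2 : ℝ) ^ ((n : ℝ) / 2) <
          ⨆ k ∈ Finset.Icc 1 n, ⨆ s : Set.Icc (0 : ℝ) t,
            |(w k ((⌊(s : ℝ) / (T / 2 ^ n)⌋ : ℝ) * (T / 2 ^ n)) ω -
                w k (((⌊(s : ℝ) / (T / 2 ^ n)⌋ : ℝ) - 1) * (T / 2 ^ n)) ω) /
              (T / 2 ^ n)|})
        atTop (nhds 0) := by
  refine ⟨2, two_pos, fun δ hδ t ht => ?_⟩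
  have hsT : 0 < Real.sqrt T := Real.sqrt_pos.2 hT
  have hδ0 : 0 < δ := lt_trans (by positivity) hδ
  have hδT : 4 ≤ δ ^ 2 * T := by
    have h1 : 2 < δ * Real.sqrt T := (div_lt_iff₀ hsT).1 hδ
    have h2 : (δ * Real.sqrt T) ^ 2 = δ ^ 2 * T := by rw [mul_pow, Real.sq_sqrt hT.le]
    nlinarith
  have hlim : Tendsto (fun n : ℕ => ENNReal.ofReal (2 * ((n : ℝ) * (1 / 2 : ℝ) ^ n)))
      atTop (nhds 0) := by
    have h := (tendsto_self_mul_const_pow_of_lt_one (r := 1 / 2) (by norm_num)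
      (by norm_num)).const_mul 2
    have h' := ENNReal.tendsto_ofReal h
    simpa using h'
  refine tendsto_of_tendsto_of_tendsto_of_le_of_le tendsto_const_nhds hlim
    (fun _ => zero_le) (fun n => ?_)
  dsimp only
  set σ : ℝ := T / 2 ^ n with hσ
  have hσ0 : 0 < σ := by positivity
  set c : ℝ := δ * (n : ℝ) ^ ((1 : ℝ) / 2) * (2 : ℝ) ^ ((n : ℝ) / 2) with hc
  have hc0 : 0 ≤ c := by positivity
  have hc2 : c ^ 2 = δ ^ 2 * n * 2 ^ n := by
    rw [hc, mul_pow, mul_pow, ← Real.sqrt_eq_rpow, Real.sq_sqrt (Nat.cast_nonneg n),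
      ← Real.rpow_natCast ((2 : ℝ) ^ ((n : ℝ) / 2)) 2, ← Real.rpow_mul (by norm_num),
      ← Real.rpow_natCast 2 n]
    congr 2
    push_cast
    ring
  have htail : ∀ k j : ℕ, P {ω | c * σ < |w k (((j : ℝ) + 1) * σ) ω - w k ((j : ℝ) * σ) ω|}
      ≤ ENNReal.ofReal (2 * (1 / 4 : ℝ) ^ n) := by
    intro k j
    have hg := (hBM k).incr_gauss ((j : ℝ) * σ) (((j : ℝ) + 1) * σ) (by positivity)
      (by nlinarith)
    refine (gauss_tail P _ _ hg (c * σ) (by positivity)).trans ?_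
    apply ENNReal.ofReal_le_ofReal
    have e1 : ((Real.toNNReal (((j : ℝ) + 1) * σ - (j : ℝ) * σ) : NNReal) : ℝ) = σ := by
      rw [Real.coe_toNNReal _ (by nlinarith)]; ring
    rw [e1]
    have e2 : -(c * σ) ^ 2 / (2 * σ) = n * (-(δ ^ 2 * T) / 2) := by
      rw [mul_pow, hc2, hσ]
      field_simp
    rw [e2, Real.exp_nat_mul]
    have e3 : Real.exp (-(δ ^ 2 * T) / 2) ≤ 1 / 4 := by
      have e4 : Real.exp (-(δ ^ 2 * T) / 2) ≤ Real.exp (-2) :=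
        Real.exp_le_exp.2 (by linarith)
      have e5 : (2 : ℝ) ≤ Real.exp 1 := by linarith [Real.add_one_le_exp (1 : ℝ)]
      have e6 : Real.exp (-2) = (Real.exp 1 * Real.exp 1)⁻¹ := by
        rw [← Real.exp_add, ← Real.exp_neg]; norm_num
      have e7 : (Real.exp 1 * Real.exp 1)⁻¹ ≤ (4 : ℝ)⁻¹ :=
        inv_anti₀ (by norm_num) (by nlinarith)
      rw [e6] at e4
      linarith
    gcongr
  have hsubset : {ω | c < ⨆ k ∈ Finset.Icc 1 n, ⨆ s : Set.Icc (0 : ℝ) t,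
            |(w k ((⌊(s : ℝ) / σ⌋ : ℝ) * σ) ω - w k (((⌊(s : ℝ) / σ⌋ : ℝ) - 1) * σ) ω) / σ|} ⊆
      ⋃ k ∈ Finset.Icc 1 n, ⋃ j ∈ Finset.range (2 ^ n),
        {ω | c * σ < |w k (((j : ℝ) + 1) * σ) ω - w k ((j : ℝ) * σ) ω|} := by
    intro ω hω
    by_contra hcon
    simp only [Set.mem_iUnion, Set.mem_setOf_eq, not_exists, not_lt] at hcon
    refine absurd (show c < _ from hω) (not_lt.2 ?_)
    refine Real.iSup_le (fun k => Real.iSup_le (fun hk => Real.iSup_le (fun s => ?_) hc0) hc0) hc0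
    obtain ⟨s, hs0, hst⟩ := s
    dsimp only
    rw [abs_div, abs_of_pos hσ0, div_le_iff₀ hσ0]
    obtain ⟨m, hm⟩ : ∃ m : ℕ, ⌊s / σ⌋ = (m : ℤ) :=
      Int.eq_ofNat_of_zero_le (Int.floor_nonneg.2 (by positivity))
    have hmle : m ≤ 2 ^ n := by
      have h1 : (m : ℝ) ≤ s / σ := by
        have := Int.floor_le (s / σ)
        rw [hm] at this
        exact_mod_cast this
      have h2 : s / σ ≤ 2 ^ n := by
        rw [div_le_iff₀ hσ0, hσ]
        have := ht.2
        field_simp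
        linarith
      exact_mod_cast h1.trans h2
    rw [hm]
    rcases m with _ | j
    · rw [(hBM k).zero_nonpos _ (by simp), (hBM k).zero_nonpos _ (by simp [hσ0.le])]
      simp only [sub_zero, abs_zero]
      positivity
    · have := hcon k hk j (Finset.mem_range.2 hmle)
      simpa using this
  refine (measure_mono hsubset).trans ?_
  refine (measure_biUnion_finset_le _ _).trans ?_
  have hk : ∀ k ∈ Finset.Icc 1 n, P (⋃ j ∈ Finset.range (2 ^ n),
        {ω | c * σ < |w k (((j : ℝ) + 1) * σ) ω - w k ((j : ℝ) * σ) ω|}) ≤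
        ((2 ^ n : ℕ) : ENNReal) * ENNReal.ofReal (2 * (1 / 4 : ℝ) ^ n) := by
    intro k _
    refine (measure_biUnion_finset_le _ _).trans ?_
    refine (Finset.sum_le_sum (fun j _ => htail k j)).trans ?_
    simp
  refine (Finset.sum_le_sum hk).trans ?_
  rw [Finset.sum_const, Nat.card_Icc, Nat.add_sub_cancel, nsmul_eq_mul,
    ← ENNReal.ofReal_natCast, ← ENNReal.ofReal_natCast,
    ← ENNReal.ofReal_mul (by positivity), ← ENNReal.ofReal_mul (by positivity)]
  apply ENNReal.ofReal_le_ofReal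
  apply le_of_eq
  have : (1 / 2 : ℝ) ^ n = 2 ^ n * (1 / 4 : ℝ) ^ n := by rw [← mul_pow]; norm_num
  rw [this]
  push_cast
  ring
end

section
/- Let T > 0 and let (w_k)_{k∈ℕ} be a sequence of independent standard one-dimensional Brownian motions on a probability space (Ω, F, P), extended by w_k(t) = 0 for t ≤ 0. For n ∈ ℕ set σ = T/2^n and, for t ∈ [0,T], ẇ^n_k(t) = σ^{-1} ( w_k(⌊t/σ⌋σ) − w_k((⌊t/σ⌋ − 1)σ) ), where ⌊·⌋ is the floor function. Then there exists a constant δ₀ > 0 such that for every δ > δ₀/√T and every t ∈ [0,T], lim_{n→∞} P( sup_{0≤s≤t} ( ∑_{k=1}^n |ẇ^n_k(s)|^2 )^{1/2} > δ n 2^{n/2} ) = 0. -/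
open MeasureTheory ProbabilityTheory Filter

lemma gauss_sq_tail {Ω : Type*} [MeasurableSpace Ω] (P : Measure Ω) [IsProbabilityMeasure P]
    (X : Ω → ℝ) (v B : ℝ) (hv : 0 < v) (hB : 0 ≤ B)
    (hX : P.map X = gaussianReal 0 (Real.toNNReal v)) :
    P {ω | B ≤ X ω ^ 2} ≤ ENNReal.ofReal (2 * Real.exp (-B / (2 * v))) := by
  have hXm : AEMeasurable X P := aemeasurable_of_map_neZero (by rw [hX]; infer_instance)
  have hsub : HasSubgaussianMGF X (Real.toNNReal v) P := by
    refine ⟨fun t => ?_, fun t => ?_⟩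
    · have h := integrable_exp_mul_gaussianReal (μ := 0) (v := Real.toNNReal v) t
      rw [← hX] at h
      exact h.comp_aemeasurable hXm
    · rw [mgf_gaussianReal hX]
      simp
  have h1 := hsub.measure_ge_le (Real.sqrt_nonneg B)
  have h2 := hsub.neg.measure_ge_le (Real.sqrt_nonneg B)
  have hs : {ω | B ≤ X ω ^ 2} ⊆ {ω | Real.sqrt B ≤ X ω} ∪ {ω | Real.sqrt B ≤ (-X) ω} := by
    intro ω hω
    have h := Real.abs_le_sqrt (x := Real.sqrt B) (y := X ω ^ 2) (by
      rw [Real.sq_sqrt hB]; exact hω)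
    rw [Real.sqrt_sq_eq_abs, abs_of_nonneg (Real.sqrt_nonneg B)] at h
    rcases le_abs.1 h with h | h
    · exact Or.inl h
    · exact Or.inr h
  rw [Real.sq_sqrt hB, Real.coe_toNNReal v hv.le] at h1 h2
  have h3 : P.real {ω | B ≤ X ω ^ 2} ≤ 2 * Real.exp (-B / (2 * v)) := by
    refine (measureReal_mono hs).trans ((measureReal_union_le _ _).trans ?_)
    linarith
  rw [← ofReal_measureReal]
  exact ENNReal.ofReal_le_ofReal h3

/-- Wong–Zakai estimate (Lemma 2.1 of \cite{ICAM}), second form: there is `δ₀ > 0`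
such that for every `δ > δ₀/√T` and `t ∈ [0,T]`,
`P(sup_{0≤s≤t} (∑_{k=1}^n |ẇⁿ_k(s)|²)^{1/2} > δ n 2^{n/2}) → 0` as `n → ∞`,
where `ẇⁿ_k(s) = σ⁻¹(w_k(⌊s/σ⌋σ) − w_k((⌊s/σ⌋−1)σ))` and `σ = T/2ⁿ`. -/
theorem wong_zakai_sup_norm (T : ℝ) (hT : 0 < T)
    {Ω : Type*} [MeasurableSpace Ω] (P : Measure Ω) [IsProbabilityMeasure P]
    (w : ℕ → ℝ → Ω → ℝ) (hBM : ∀ k, IsStandardBrownian P (w k))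
    (hindep : iIndepFun
      (fun (k : ℕ) (ω : Ω) (t : ℝ) => w k t ω) P) :
    ∃ δ₀ : ℝ, 0 < δ₀ ∧ ∀ δ : ℝ, δ₀ / Real.sqrt T < δ → ∀ t ∈ Set.Icc (0 : ℝ) T,
      Tendsto (fun n : ℕ =>
        P {ω | δ * (n : ℝ) * (2 : ℝ) ^ ((n : ℝ) / 2) <
          ⨆ s : Set.Icc (0 : ℝ) t,
            Real.sqrt (∑ k ∈ Finset.Icc 1 n,
              ((w k ((⌊(s : ℝ) / (T / 2 ^ n)⌋ : ℝ) * (T / 2 ^ n)) ω -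
                  w k (((⌊(s : ℝ) / (T / 2 ^ n)⌋ : ℝ) - 1) * (T / 2 ^ n)) ω) /
                (T / 2 ^ n)) ^ (2 : ℕ))})
        atTop (nhds 0) := by
  refine ⟨2, two_pos, fun δ hδ t ht => ?_⟩
  have hδ0 : 0 < δ := lt_of_le_of_lt (by positivity) hδ
  have hδT : 4 ≤ δ ^ 2 * T := by
    have h1 : 2 < δ * Real.sqrt T := (div_lt_iff₀ (Real.sqrt_pos.2 hT)).1 hδ
    have h2 : (δ * Real.sqrt T) ^ 2 = δ ^ 2 * T := by
      rw [mul_pow, Real.sq_sqrt hT.le]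
    nlinarith
  have hlim : Tendsto (fun n : ℕ => ENNReal.ofReal (4 * ((n : ℝ) * (1 / 2 : ℝ) ^ n)))
      atTop (nhds 0) := by
    have h := (tendsto_self_mul_const_pow_of_lt_one (r := 1 / 2) (by norm_num)
      (by norm_num)).const_mul 4
    rw [mul_zero] at h
    simpa using ENNReal.tendsto_ofReal h
  refine tendsto_of_tendsto_of_tendsto_of_le_of_le' tendsto_const_nhds hlim
    (Eventually.of_forall fun _ => zero_le) ?_
  filter_upwards [eventually_ge_atTop 1] with n hn
  have hn0 : (0 : ℝ) < n := by exact_mod_cast hn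
  set σ : ℝ := T / 2 ^ n with hσ
  have hσ0 : 0 < σ := by positivity
  set B : ℝ := δ ^ 2 * n * 2 ^ n * σ ^ 2 with hBdef
  have hB0 : 0 < B := by positivity
  have hσT : σ * 2 ^ n = T := by rw [hσ]; field_simp
  let A : ℕ → ℕ → Set Ω := fun k j =>
    {ω | B ≤ (w k ((j : ℝ) * σ) ω - w k (((j : ℝ) - 1) * σ) ω) ^ 2}
  have hA : ∀ k j, P (A k j) ≤ ENNReal.ofReal (2 * Real.exp (-B / (2 * σ))) := by
    intro k j
    rcases Nat.eq_zero_or_pos j with rfl | hj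
    · have : A k 0 = ∅ := by
        ext ω
        simp only [A, Set.mem_ofPred_eq, Set.mem_empty_iff_false, iff_false, not_le]
        rw [(hBM k).zero_nonpos _ (by simp), (hBM k).zero_nonpos _ (by simp; linarith)]
        simpa using hB0
      rw [this]; simp
    · have hj1 : (1 : ℝ) ≤ j := by exact_mod_cast hj
      refine gauss_sq_tail P _ σ B hσ0 hB0.le ?_
      rw [(hBM k).incr_gauss (((j : ℝ) - 1) * σ) ((j : ℝ) * σ)
        (mul_nonneg (by linarith) hσ0.le) (by nlinarith)]
      congr 2
      ring
  have hsub : {ω | δ * (n : ℝ) * (2 : ℝ) ^ ((n : ℝ) / 2) <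
          ⨆ s : Set.Icc (0 : ℝ) t,
            Real.sqrt (∑ k ∈ Finset.Icc 1 n,
              ((w k ((⌊(s : ℝ) / σ⌋ : ℝ) * σ) ω -
                  w k (((⌊(s : ℝ) / σ⌋ : ℝ) - 1) * σ) ω) / σ) ^ (2 : ℕ))} ⊆
      ⋃ k ∈ Finset.Icc 1 n, ⋃ j ∈ Finset.range (2 ^ n + 1), A k j := by
    intro ω hω
    by_contra hcon
    simp only [Set.mem_iUnion, not_exists] at hcon
    refine absurd hω (not_lt.2 (Real.iSup_le (fun s => ?_) (by positivity)))
    have hs0 : 0 ≤ (s : ℝ) / σ := div_nonneg s.2.1 hσ0.le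
    have hs1 : (s : ℝ) / σ ≤ 2 ^ n := by
      rw [div_le_iff₀ hσ0, mul_comm, hσT]
      exact s.2.2.trans ht.2
    obtain ⟨j, hj⟩ := Int.eq_ofNat_of_zero_le (Int.floor_nonneg.2 hs0)
    have hjr : j < 2 ^ n + 1 := by
      have h1 : ((⌊(s : ℝ) / σ⌋ : ℤ) : ℝ) ≤ 2 ^ n := (Int.floor_le _).trans hs1
      rw [hj] at h1
      have h2 : j ≤ 2 ^ n := by exact_mod_cast h1
      omega
    rw [hj]
    have h2n : ((2 : ℝ) ^ ((n : ℝ) / 2)) ^ 2 = 2 ^ n := by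
      rw [← Real.rpow_natCast, ← Real.rpow_mul (by norm_num)]
      rw [← Real.rpow_natCast]
      congr 1
      push_cast
      ring
    refine Real.sqrt_le_iff.2 ⟨by positivity, ?_⟩
    have hterm : ∀ k ∈ Finset.Icc 1 n,
        ((w k ((((j : ℕ) : ℤ) : ℝ) * σ) ω - w k (((((j : ℕ) : ℤ) : ℝ) - 1) * σ) ω) / σ) ^ 2
          ≤ δ ^ 2 * n * 2 ^ n := by
      intro k hk
      have h := hcon k hk j (Finset.mem_range.2 hjr)
      simp only [A, Set.mem_ofPred_eq, not_le] at h
      rw [div_pow, div_le_iff₀ (by positivity)]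
      rw [Int.cast_natCast]; exact h.le
    refine (Finset.sum_le_sum hterm).trans (le_of_eq ?_)
    rw [Finset.sum_const, Nat.card_Icc, nsmul_eq_mul, mul_pow, mul_pow, h2n]
    simp only [Nat.add_sub_cancel]
    ring
  refine (measure_mono hsub).trans ?_
  refine (measure_biUnion_finset_le _ _).trans ?_
  refine (Finset.sum_le_sum fun k _ => (measure_biUnion_finset_le _ _).trans
    (Finset.sum_le_sum fun j _ => hA k j)).trans ?_
  simp only [Finset.sum_const, Finset.card_range, Nat.card_Icc, nsmul_eq_mul,
    Nat.add_sub_cancel]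
  rw [← ENNReal.ofReal_natCast, ← ENNReal.ofReal_natCast,
    ← ENNReal.ofReal_mul (by positivity), ← ENNReal.ofReal_mul (by positivity)]
  refine ENNReal.ofReal_le_ofReal ?_
  have hexp : Real.exp (-B / (2 * σ)) ≤ (1 / 4 : ℝ) ^ n := by
    have h1 : -B / (2 * σ) ≤ (n : ℝ) * (-2) := by
      have : -B / (2 * σ) = -(δ ^ 2 * T) * n / 2 := by
        rw [hBdef, ← hσT]; field_simp
      rw [this]
      nlinarith
    refine (Real.exp_le_exp.2 h1).trans ?_
    rw [Real.exp_nat_mul]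
    refine pow_le_pow_left₀ (Real.exp_pos _).le ?_ n
    have h2 : (2 : ℝ) ≤ Real.exp 1 := by
      have := Real.add_one_le_exp (1 : ℝ); linarith
    have h3 : Real.exp 2 = Real.exp 1 * Real.exp 1 := by rw [← Real.exp_add]; norm_num
    rw [Real.exp_neg, one_div]
    exact inv_anti₀ (by norm_num) (by rw [h3]; nlinarith)
  have hp : (1 : ℝ) ≤ 2 ^ n := one_le_pow₀ (by norm_num)
  calc (n : ℝ) * (((2 ^ n + 1 : ℕ) : ℝ) * (2 * Real.exp (-B / (2 * σ))))
      ≤ (n : ℝ) * ((2 ^ n + 2 ^ n) * (2 * (1 / 4 : ℝ) ^ n)) := by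
        push_cast
        gcongr
    _ = 4 * ((n : ℝ) * ((2 : ℝ) ^ n * (1 / 4 : ℝ) ^ n)) := by ring
    _ = 4 * ((n : ℝ) * (1 / 2 : ℝ) ^ n) := by
        rw [← mul_pow]; norm_num
end
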